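/- Let φ: ℕ → (0,∞) be non-decreasing with φ(n) → ∞. There exists a constant C > 0 such that for every n ≥ 2 with φ(n) ≥ 2, the Lebesgue measure of A_n(φ) satisfies ℒ(A_n(φ)) ≤ C·( n·(log φ(n))²/φ(n)² + 1/φ(n) ). -/

import Mathlib

/-!
The Gauss measure `dx / (1 + x)` is comparable to Lebesgue measure on `(0,1)` and does not increase
under preimages by the Gauss map `T` (`gaussMeas_preimage_le`). Moreover, prescribing the first
digit costs a quadratic factor, whatever is required of the later digits:
`μ(a₁ = a, T x ∈ B) ≤ (2 / a²) μ(B)` (`gaussMeas_cylinder_le`). Both facts come from the change of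
variables `x = 1 / (a + y)` on each cylinder, the first one together with the telescoping sum
`∑ₐ 1 / ((a + y)(a + y + 1)) = 1 / (1 + y)`.

Write `t = φ(n)`. Summing the quadratic factors over pairs of digits gives
`μ(a₁ a₂ ≥ t, T² x ∈ B) ≪ (log t / t) μ(B)` (`gaussMeas_largeProd_inter_le`). Applying this twice
bounds the contribution of each `k ≤ n - 2` by a multiple of `(log t / t)²`. For `k = n - 1` the two
products share the digit `b = aₙ`, and summing over its value gives
`∑_b b⁻² min(1, b / t)² ≪ 1 / t` (`gaussMeas_overlap_le`).
-/

open scoped ENNReal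
open MeasureTheory Filter

/-- The Gauss map `T(x) = 1/x - ⌊1/x⌋`. -/
noncomputable def gaussMap (x : ℝ) : ℝ := 1 / x - ⌊1 / x⌋

/-- The `n`-th partial quotient `a_n(x) = ⌊1 / T^{n-1}(x)⌋` (for `n ≥ 1`). -/
noncomputable def pq (x : ℝ) (n : ℕ) : ℕ := ⌊1 / (gaussMap^[n - 1] x)⌋₊

/-- The set `F₂(φ)` of irrational `x ∈ (0,1)` such that for infinitely many `n` there are
`1 ≤ k ≠ l ≤ n` with `a_k a_{k+1} ≥ φ(n)` and `a_l a_{l+1} ≥ φ(n)`. -/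
def F2 (φ : ℕ → ℝ) : Set ℝ :=
  {x | x ∈ Set.Ioo (0 : ℝ) 1 ∧ Irrational x ∧
    {n : ℕ | ∃ k l : ℕ, 1 ≤ k ∧ k ≤ n ∧ 1 ≤ l ∧ l ≤ n ∧ k ≠ l ∧
      φ n ≤ (pq x k : ℝ) * (pq x (k + 1) : ℝ) ∧
      φ n ≤ (pq x l : ℝ) * (pq x (l + 1) : ℝ)}.Infinite}

/-- The set `A_n(φ)` of irrational `x ∈ (0,1)` for which there is `1 ≤ k < n` with
`a_k a_{k+1} ≥ φ(n)` and `a_n a_{n+1} ≥ φ(n)`. -/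
def Aset (φ : ℕ → ℝ) (n : ℕ) : Set ℝ :=
  {x | x ∈ Set.Ioo (0 : ℝ) 1 ∧ Irrational x ∧ ∃ k : ℕ, 1 ≤ k ∧ k < n ∧
    φ n ≤ (pq x k : ℝ) * (pq x (k + 1) : ℝ) ∧
    φ n ≤ (pq x n : ℝ) * (pq x (n + 1) : ℝ)}

/-! ### The Gauss measure -/

/-- The irrational numbers of `(0,1)`, on which the Gauss map acts. -/
def irrUnit : Set ℝ := Set.Ioo (0 : ℝ) 1 ∩ {x | Irrational x}

/-- The density `1 / (1 + x)` of the (unnormalised) Gauss measure. -/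
noncomputable def gaussDensity (x : ℝ) : ℝ≥0∞ := ENNReal.ofReal (1 / (1 + x))

/-- The Gauss measure `dx / (1 + x)` on the irrationals of `(0,1)`, not normalised:
its total mass is `log 2`. -/
noncomputable def gaussMeas : Measure ℝ := (volume.restrict irrUnit).withDensity gaussDensity

lemma measurableSet_irrUnit : MeasurableSet irrUnit := by
  refine measurableSet_Ioo.inter ?_
  have h : {x : ℝ | Irrational x} = (Set.range ((↑) : ℚ → ℝ))ᶜ := rfl
  rw [h]
  exact (Set.countable_range _).measurableSet.compl

lemma measurable_gaussDensity : Measurable gaussDensity := by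
  unfold gaussDensity
  fun_prop

lemma gaussMeas_apply {A : Set ℝ} (hA : MeasurableSet A) :
    gaussMeas A = ∫⁻ x in A ∩ irrUnit, gaussDensity x := by
  rw [gaussMeas, withDensity_apply _ hA, Measure.restrict_restrict hA]

lemma measurable_gaussMap : Measurable gaussMap := by
  have h : gaussMap = fun x : ℝ => Int.fract (1 / x) := rfl
  rw [h]
  fun_prop

lemma measurable_pq_one : Measurable fun x => pq x 1 := by
  have h : (fun x => pq x 1) = fun x : ℝ => ⌊1 / x⌋₊ := by
    funext x; simp [pq]
  rw [h]
  fun_prop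

lemma pq_add (x : ℝ) (j k : ℕ) (hk : 1 ≤ k) : pq x (j + k) = pq (gaussMap^[j] x) k := by
  unfold pq
  rw [← Function.iterate_add_apply]
  congr 4
  omega

lemma measurableSet_pq_eq (a : ℕ) : MeasurableSet {x | pq x 1 = a} :=
  measurable_pq_one (measurableSet_singleton a)

lemma measurableSet_le_pq (s : ℝ) : MeasurableSet {x | s ≤ (pq x 1 : ℝ)} :=
  measurableSet_le measurable_const (measurable_from_nat.comp measurable_pq_one)

/-- On the cylinder `a₁ = a` the Gauss map has the inverse branch `y ↦ 1 / (a + y)`. -/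
lemma cylinder_subset_image (a : ℕ) (B : Set ℝ) :
    ({x | pq x 1 = a} ∩ gaussMap ⁻¹' B) ∩ irrUnit ⊆
      (fun y : ℝ => 1 / (a + y)) '' (B ∩ irrUnit) := by
  rintro x ⟨⟨hxa, hxB⟩, ⟨hx0, hx1⟩, hirr⟩
  have hinv : Irrational (1 / x) := by
    rw [one_div]; exact hirr.inv
  have hfl : ((⌊1 / x⌋₊ : ℕ) : ℝ) = (⌊1 / x⌋ : ℝ) := natCast_floor_eq_intCast_floor (by positivity)
  have ha : (a : ℝ) = (⌊1 / x⌋ : ℝ) := by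
    rw [← hfl, ← hxa.out]; simp [pq]
  have hT : gaussMap x = 1 / x - a := by rw [ha]; rfl
  have hTirr : Irrational (gaussMap x) := by
    rw [hT]; exact hinv.sub_natCast a
  refine ⟨gaussMap x, ⟨hxB, ⟨?_, Int.fract_lt_one _⟩, hTirr⟩, ?_⟩
  · exact lt_of_le_of_ne (Int.fract_nonneg _) hTirr.ne_zero.symm
  · simp [hT]

lemma pq_one_pos {x : ℝ} (hx : x ∈ irrUnit) : 1 ≤ pq x 1 := by
  obtain ⟨⟨h0, h1⟩, -⟩ := hx
  simp only [pq, Nat.sub_self, Function.iterate_zero, id]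
  rw [Nat.one_le_floor_iff]
  exact (one_le_div h0).2 h1.le

/-- Change of variables along the inverse branch `y ↦ 1 / (a + y)`. -/
lemma gaussMeas_cylinder_le_lintegral (a : ℕ) (ha : 1 ≤ a) {B : Set ℝ} (hB : MeasurableSet B) :
    gaussMeas ({x | pq x 1 = a} ∩ gaussMap ⁻¹' B) ≤
      ∫⁻ y in B ∩ irrUnit, ENNReal.ofReal (1 / ((a + y) * (a + y + 1))) := by
  have ha' : (1 : ℝ) ≤ a := by exact_mod_cast ha
  rw [gaussMeas_apply ((measurableSet_pq_eq a).inter (measurable_gaussMap hB))]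
  refine (lintegral_mono_set (cylinder_subset_image a B)).trans ?_
  rw [lintegral_image_eq_lintegral_abs_deriv_mul (f' := fun y => -1 / ((a : ℝ) + y) ^ 2)
    (hB.inter measurableSet_irrUnit)]
  · refine setLIntegral_mono' (hB.inter measurableSet_irrUnit) ?_
    rintro y ⟨-, ⟨hy0, hy1⟩, -⟩
    have h1 : 0 < (a : ℝ) + y := by linarith
    rw [gaussDensity, ← ENNReal.ofReal_mul (abs_nonneg _), neg_div, abs_neg,
      abs_of_nonneg (by positivity)]
    apply ENNReal.ofReal_le_ofReal
    apply le_of_eq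
    field_simp
  · rintro y ⟨-, ⟨hy0, hy1⟩, -⟩
    have h1 : (a : ℝ) + y ≠ 0 := by linarith
    have := ((hasDerivAt_id y).const_add (a : ℝ)).fun_inv h1
    simpa [one_div] using this.hasDerivWithinAt
  · rintro y ⟨-, ⟨hy0, hy1⟩, -⟩ z ⟨-, ⟨hz0, hz1⟩, -⟩ h
    simp only [one_div, inv_inj] at h
    linarith

/-- Prescribing the first digit costs a factor `2 / a²`. For `a = 0` both sides vanish. -/
lemma gaussMeas_cylinder_le (a : ℕ) {B : Set ℝ} (hB : MeasurableSet B) :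
    gaussMeas ({x | pq x 1 = a} ∩ gaussMap ⁻¹' B) ≤
      ENNReal.ofReal (2 / (a : ℝ) ^ 2) * gaussMeas B := by
  rcases Nat.eq_zero_or_pos a with rfl | ha
  · rw [gaussMeas_apply ((measurableSet_pq_eq 0).inter (measurable_gaussMap hB))]
    have : ({x | pq x 1 = 0} ∩ gaussMap ⁻¹' B) ∩ irrUnit = ∅ := by
      ext x
      simp only [Set.mem_inter_iff, Set.mem_ofPred_eq, Set.mem_empty_iff_false, iff_false]
      rintro ⟨⟨h, -⟩, hx⟩
      have := pq_one_pos hx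
      omega
    simp [this]
  · have ha' : (1 : ℝ) ≤ a := by exact_mod_cast ha
    refine (gaussMeas_cylinder_le_lintegral a ha hB).trans ?_
    rw [gaussMeas_apply hB, ← lintegral_const_mul _ measurable_gaussDensity]
    refine setLIntegral_mono' (hB.inter measurableSet_irrUnit) ?_
    rintro y ⟨-, ⟨hy0, hy1⟩, -⟩
    rw [gaussDensity, ← ENNReal.ofReal_mul (by positivity)]
    apply ENNReal.ofReal_le_ofReal
    rw [div_mul_div_comm, div_le_div_iff₀ (by positivity) (by positivity)]
    nlinarith [mul_pos hy0 (show (0 : ℝ) < a by linarith), sq_nonneg ((a : ℝ) - 1),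
      mul_nonneg (sub_nonneg.2 hy1.le) (sq_nonneg (a : ℝ))]

lemma sum_branch_weights_le (y : ℝ) (hy : 0 < y) :
    ∑' a : ℕ, ENNReal.ofReal (1 / (((a + 1 : ℕ) + y) * ((a + 1 : ℕ) + y + 1))) ≤
      gaussDensity y := by
  apply ENNReal.tsum_le_of_sum_range_le
  intro N
  rw [← ENNReal.ofReal_sum_of_nonneg (fun i _ => by positivity)]
  apply ENNReal.ofReal_le_ofReal
  have h : ∑ a ∈ Finset.range N, 1 / (((a + 1 : ℕ) + y) * ((a + 1 : ℕ) + y + 1)) =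
      1 / (1 + y) - 1 / (N + 1 + y) := by
    induction N with
    | zero => simp
    | succ N ih =>
      rw [Finset.sum_range_succ, ih]
      push_cast
      field_simp
      ring
  rw [h]
  have : 0 ≤ 1 / (N + 1 + y) := by positivity
  linarith

/-- The half of the invariance of the Gauss measure that is needed. -/
lemma gaussMeas_preimage_le {B : Set ℝ} (hB : MeasurableSet B) :
    gaussMeas (gaussMap ⁻¹' B) ≤ gaussMeas B := by
  have hcov : gaussMap ⁻¹' B ⊆ ⋃ a : ℕ, ({x | pq x 1 = a} ∩ gaussMap ⁻¹' B) := by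
    intro x hx
    exact Set.mem_iUnion.2 ⟨pq x 1, rfl, hx⟩
  refine (measure_mono hcov).trans ((measure_iUnion_le _).trans ?_)
  rw [tsum_eq_zero_add' ENNReal.summable]
  have h0 : gaussMeas ({x | pq x 1 = 0} ∩ gaussMap ⁻¹' B) = 0 := by
    simpa using gaussMeas_cylinder_le 0 hB
  rw [h0, zero_add]
  refine (ENNReal.tsum_le_tsum fun a =>
    gaussMeas_cylinder_le_lintegral (a + 1) (by omega) hB).trans ?_
  rw [← lintegral_tsum (fun a => by fun_prop), gaussMeas_apply hB]
  refine setLIntegral_mono' (hB.inter measurableSet_irrUnit) ?_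
  rintro y ⟨-, ⟨hy0, hy1⟩, -⟩
  exact sum_branch_weights_le y hy0

lemma gaussMeas_preimage_iterate_le (j : ℕ) {B : Set ℝ} (hB : MeasurableSet B) :
    gaussMeas (gaussMap^[j] ⁻¹' B) ≤ gaussMeas B := by
  induction j with
  | zero => simp
  | succ j ih =>
    rw [Function.iterate_succ, Set.preimage_comp]
    exact (gaussMeas_preimage_le (measurable_gaussMap.iterate j hB)).trans ih

lemma gaussMeas_univ_le : gaussMeas Set.univ ≤ 1 := by
  rw [gaussMeas_apply MeasurableSet.univ, Set.univ_inter]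
  calc ∫⁻ x in irrUnit, gaussDensity x ≤ ∫⁻ _ in irrUnit, 1 := by
        refine setLIntegral_mono' measurableSet_irrUnit ?_
        rintro y ⟨⟨hy0, hy1⟩, -⟩
        rw [gaussDensity, ENNReal.ofReal_le_one, div_le_one (by linarith)]
        linarith
    _ = volume irrUnit := by simp
    _ ≤ volume (Set.Ioo (0 : ℝ) 1) := measure_mono Set.inter_subset_left
    _ = 1 := by simp

lemma volume_le_gaussMeas {A : Set ℝ} (hA : MeasurableSet A) :
    volume (A ∩ irrUnit) ≤ 2 * gaussMeas A := by
  rw [gaussMeas_apply hA, ← lintegral_const_mul _ measurable_gaussDensity]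
  calc volume (A ∩ irrUnit) = ∫⁻ _ in A ∩ irrUnit, 1 := by simp
    _ ≤ _ := by
        refine setLIntegral_mono' (hA.inter measurableSet_irrUnit) ?_
        rintro y ⟨-, ⟨hy0, hy1⟩, -⟩
        rw [gaussDensity, show (2 : ℝ≥0∞) = ENNReal.ofReal 2 by simp,
          ← ENNReal.ofReal_mul (by norm_num), ENNReal.one_le_ofReal, mul_one_div,
          one_le_div (by linarith)]
        linarith

/-! ### Numerical series -/

lemma sum_tail_le (s : ℝ) (hs : 0 < s) (N : ℕ) :
    ∑ a ∈ Finset.range N, (if s ≤ (a : ℝ) then 1 / (a : ℝ) ^ 2 else 0) ≤ 2 * min 1 (1 / s) := by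
  rw [← Finset.sum_filter]
  have hm : 1 ≤ ⌈s⌉₊ := Nat.one_le_ceil_iff.2 hs
  have hsub : (Finset.range N).filter (fun a : ℕ => s ≤ (a : ℝ)) ⊆
      Finset.Ioo (⌈s⌉₊ - 1) N := by
    intro a ha
    rw [Finset.mem_filter, Finset.mem_range] at ha
    have := Nat.ceil_le.2 ha.2
    rw [Finset.mem_Ioo]
    omega
  have h1 : ∑ a ∈ (Finset.range N).filter (fun a : ℕ => s ≤ (a : ℝ)), 1 / (a : ℝ) ^ 2 ≤
      2 / (⌈s⌉₊ : ℝ) := by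
    refine (Finset.sum_le_sum_of_subset_of_nonneg hsub fun i _ _ => by positivity).trans ?_
    have h := sum_Ioo_inv_sq_le (α := ℝ) (⌈s⌉₊ - 1) N
    have e : ((⌈s⌉₊ - 1 : ℕ) : ℝ) + 1 = (⌈s⌉₊ : ℝ) := by
      rw [Nat.cast_sub hm]; simp
    rw [e] at h
    simpa [one_div] using h
  have hm' : (1 : ℝ) ≤ (⌈s⌉₊ : ℝ) := by exact_mod_cast hm
  have h2 : (2 : ℝ) / (⌈s⌉₊ : ℝ) = 2 * (1 / (⌈s⌉₊ : ℝ)) := by ring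
  refine h1.trans ?_
  rw [h2]
  refine mul_le_mul_of_nonneg_left (le_min ?_ ?_) (by norm_num)
  · rw [div_le_one (by linarith)]; exact hm'
  · exact one_div_le_one_div_of_le hs (Nat.le_ceil s)

lemma sum_inv_le_log (t : ℝ) (ht : 1 ≤ t) (N : ℕ) :
    ∑ b ∈ Finset.range N, (if (b : ℝ) < t then 1 / (b : ℝ) else 0) ≤ 1 + Real.log t := by
  refine le_trans ?_ (harmonic_floor_le_one_add_log t ht)
  rw [harmonic_eq_sum_Icc, ← Finset.sum_filter]
  push_cast
  have h : ∑ b ∈ (Finset.range N).filter (fun b : ℕ => (b : ℝ) < t), 1 / (b : ℝ) ≤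
      ∑ b ∈ insert 0 (Finset.Icc 1 ⌊t⌋₊), 1 / (b : ℝ) := by
    refine Finset.sum_le_sum_of_subset_of_nonneg ?_ fun i _ _ => by positivity
    intro b hb
    rw [Finset.mem_filter] at hb
    have := Nat.le_floor hb.2.le
    rw [Finset.mem_insert, Finset.mem_Icc]
    omega
  rw [Finset.sum_insert (by simp)] at h
  simpa [one_div] using h

lemma sum_count_le (t : ℝ) (ht : 1 ≤ t) (N : ℕ) :
    ∑ b ∈ Finset.range N, (if 1 ≤ b ∧ (b : ℝ) < t then (1 : ℝ) else 0) ≤ t := by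
  rw [← Finset.sum_filter, Finset.sum_const, nsmul_eq_mul, mul_one]
  refine le_trans ?_ (Nat.floor_le (by linarith : 0 ≤ t))
  have h : (Finset.range N).filter (fun b : ℕ => 1 ≤ b ∧ (b : ℝ) < t) ⊆ Finset.Icc 1 ⌊t⌋₊ := by
    intro b hb
    rw [Finset.mem_filter] at hb
    exact Finset.mem_Icc.2 ⟨hb.2.1, Nat.le_floor hb.2.2.le⟩
  have := Finset.card_le_card h
  simp only [Nat.card_Icc, Nat.add_sub_cancel] at this
  exact_mod_cast this

/-- Splitting at `b = t` turns the sum into `∑_{b<t} 1/(bt) + ∑_{b≥t} 1/b²`. -/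
lemma sum_min_le (t : ℝ) (ht : 2 ≤ t) (N : ℕ) :
    ∑ b ∈ Finset.range N, 1 / (b : ℝ) ^ 2 * min 1 (b / t) ≤ 6 * Real.log t / t := by
  have ht0 : 0 < t := by linarith
  have hpt : ∀ b ∈ Finset.range N, 1 / (b : ℝ) ^ 2 * min 1 (b / t) ≤
      (if (b : ℝ) < t then 1 / (b : ℝ) else 0) * (1 / t) +
        (if t ≤ (b : ℝ) then 1 / (b : ℝ) ^ 2 else 0) := by
    intro b _
    rcases lt_or_ge (b : ℝ) t with h | h
    · rw [if_pos h, if_neg (not_le.2 h), add_zero]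
      refine (mul_le_mul_of_nonneg_left (min_le_right _ _) (by positivity)).trans (le_of_eq ?_)
      rcases eq_or_ne (b : ℝ) 0 with h0 | h0
      · simp [h0]
      · field_simp
    · rw [if_neg (not_lt.2 h), if_pos h, zero_mul, zero_add]
      exact mul_le_of_le_one_right (by positivity) (min_le_left _ _)
  refine (Finset.sum_le_sum hpt).trans ?_
  rw [Finset.sum_add_distrib, ← Finset.sum_mul]
  have h1 := sum_inv_le_log t (by linarith) N
  have h2 := (sum_tail_le t ht0 N).trans
    (mul_le_mul_of_nonneg_left (min_le_right _ _) (by norm_num))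
  have h3 : Real.log 2 ≤ Real.log t := Real.log_le_log (by norm_num) ht
  have h4 := Real.log_two_gt_d9
  have h5 : 3 + Real.log t ≤ 6 * Real.log t := by linarith
  calc _ ≤ (1 + Real.log t) * (1 / t) + 2 * (1 / t) := by gcongr
    _ = (3 + Real.log t) / t := by ring
    _ ≤ _ := by gcongr

lemma sum_min_sq_le (t : ℝ) (ht : 2 ≤ t) (N : ℕ) :
    ∑ b ∈ Finset.range N, 1 / (b : ℝ) ^ 2 * min 1 (b / t) ^ 2 ≤ 3 / t := by
  have ht0 : 0 < t := by linarith
  have hpt : ∀ b ∈ Finset.range N, 1 / (b : ℝ) ^ 2 * min 1 (b / t) ^ 2 ≤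
      (if 1 ≤ b ∧ (b : ℝ) < t then (1 : ℝ) else 0) * (1 / t ^ 2) +
        (if t ≤ (b : ℝ) then 1 / (b : ℝ) ^ 2 else 0) := by
    intro b _
    have hmin : 0 ≤ min 1 ((b : ℝ) / t) := le_min zero_le_one (by positivity)
    rcases lt_or_ge (b : ℝ) t with h | h
    · rcases Nat.eq_zero_or_pos b with rfl | hb
      · simp [ht0.not_ge]
      · rw [if_pos ⟨hb, h⟩, if_neg (not_le.2 h), add_zero, one_mul]
        have hb' : (0 : ℝ) < b := by exact_mod_cast hb
        refine (mul_le_mul_of_nonneg_left (pow_le_pow_left₀ hmin (min_le_right _ _) 2)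
          (by positivity)).trans (le_of_eq ?_)
        field_simp
    · rw [if_neg (fun h' => not_lt.2 h h'.2), if_pos h, zero_mul, zero_add]
      exact mul_le_of_le_one_right (by positivity) (pow_le_one₀ hmin (min_le_left _ _))
  refine (Finset.sum_le_sum hpt).trans ?_
  rw [Finset.sum_add_distrib, ← Finset.sum_mul]
  have h1 := sum_count_le t (by linarith) N
  have h2 := (sum_tail_le t ht0 N).trans
    (mul_le_mul_of_nonneg_left (min_le_right _ _) (by norm_num))
  calc _ ≤ t * (1 / t ^ 2) + 2 * (1 / t) := by gcongr
    _ = _ := by field_simp; norm_num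

/-! ### Measure of large digits and large products -/

/-- A large first digit, followed by an arbitrary event for the remaining ones. -/
lemma gaussMeas_large_digit_le (s : ℝ) (hs : 0 < s) {B : Set ℝ} (hB : MeasurableSet B) :
    gaussMeas ({x | s ≤ (pq x 1 : ℝ)} ∩ gaussMap ⁻¹' B) ≤
      ENNReal.ofReal (4 * min 1 (1 / s)) * gaussMeas B := by
  have hcov : {x | s ≤ (pq x 1 : ℝ)} ∩ gaussMap ⁻¹' B ⊆
      ⋃ a : ℕ, if s ≤ (a : ℝ) then {x | pq x 1 = a} ∩ gaussMap ⁻¹' B else ∅ := by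
    rintro x ⟨hx, hxB⟩
    refine Set.mem_iUnion.2 ⟨pq x 1, ?_⟩
    rw [if_pos hx.out]
    exact ⟨rfl, hxB⟩
  refine (measure_mono hcov).trans ((measure_iUnion_le _).trans ?_)
  have hterm : ∀ a : ℕ,
      gaussMeas (if s ≤ (a : ℝ) then {x | pq x 1 = a} ∩ gaussMap ⁻¹' B else ∅) ≤
      ENNReal.ofReal (2 * (if s ≤ (a : ℝ) then 1 / (a : ℝ) ^ 2 else 0)) * gaussMeas B := by
    intro a
    split_ifs
    · rw [mul_one_div]; exact gaussMeas_cylinder_le a hB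
    · simp
  refine (ENNReal.tsum_le_tsum hterm).trans ?_
  rw [ENNReal.tsum_mul_right]
  gcongr
  apply ENNReal.tsum_le_of_sum_range_le
  intro N
  rw [← ENNReal.ofReal_sum_of_nonneg (fun i _ => by split_ifs <;> positivity), ← Finset.mul_sum]
  apply ENNReal.ofReal_le_ofReal
  linarith [sum_tail_le s hs N]

/-- The event `a₁ a₂ ≥ t`. -/
def largeProd (t : ℝ) : Set ℝ := {x | t ≤ (pq x 1 : ℝ) * (pq (gaussMap x) 1 : ℝ)}

lemma measurableSet_largeProd (t : ℝ) : MeasurableSet (largeProd t) := by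
  have h1 : Measurable fun x => (pq x 1 : ℝ) := measurable_from_nat.comp measurable_pq_one
  exact measurableSet_le measurable_const (h1.mul (h1.comp measurable_gaussMap))

lemma div_pq_le {t : ℝ} {a b : ℕ} (h : t ≤ (a : ℝ) * (b : ℝ)) : t / (b : ℝ) ≤ (a : ℝ) :=
  div_le_of_le_mul₀ (by positivity) (by positivity) h

/-- A large first product, followed by an arbitrary event for the digits from `a₃` on. -/
lemma gaussMeas_largeProd_inter_le (t : ℝ) (ht : 2 ≤ t) {B : Set ℝ} (hB : MeasurableSet B) :
    gaussMeas (largeProd t ∩ gaussMap^[2] ⁻¹' B) ≤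
      ENNReal.ofReal (48 * Real.log t / t) * gaussMeas B := by
  have ht0 : 0 < t := by linarith
  have hcov : largeProd t ∩ gaussMap^[2] ⁻¹' B ⊆
      ⋃ b : ℕ, {x | pq x 1 = b} ∩
        gaussMap ⁻¹' ({x | t / b ≤ (pq x 1 : ℝ)} ∩ gaussMap ⁻¹' B) := by
    rintro x ⟨hx, hxB⟩
    refine Set.mem_iUnion.2 ⟨pq x 1, rfl, ?_, hxB⟩
    exact div_pq_le (hx.out.trans_eq (mul_comm _ _))
  refine (measure_mono hcov).trans ((measure_iUnion_le _).trans ?_)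
  have hterm : ∀ b : ℕ, gaussMeas ({x | pq x 1 = b} ∩
        gaussMap ⁻¹' ({x | t / b ≤ (pq x 1 : ℝ)} ∩ gaussMap ⁻¹' B)) ≤
      ENNReal.ofReal (8 * (1 / (b : ℝ) ^ 2 * min 1 (b / t))) * gaussMeas B := by
    intro b
    refine (gaussMeas_cylinder_le b
      ((measurableSet_le_pq _).inter (measurable_gaussMap hB))).trans ?_
    rcases Nat.eq_zero_or_pos b with rfl | hb
    · simp
    · have hb' : (0 : ℝ) < b := by exact_mod_cast hb
      refine (mul_le_mul_right (gaussMeas_large_digit_le (t / b) (by positivity) hB) _).trans ?_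
      rw [← mul_assoc, ← ENNReal.ofReal_mul (by positivity), one_div_div]
      apply le_of_eq
      congr 2
      ring
  refine (ENNReal.tsum_le_tsum hterm).trans ?_
  rw [ENNReal.tsum_mul_right]
  gcongr
  apply ENNReal.tsum_le_of_sum_range_le
  intro N
  rw [← ENNReal.ofReal_sum_of_nonneg (fun i _ => by positivity), ← Finset.mul_sum]
  apply ENNReal.ofReal_le_ofReal
  have := sum_min_le t ht N
  calc _ ≤ 8 * (6 * Real.log t / t) := by gcongr
    _ = _ := by ring

lemma gaussMeas_largeProd_le (t : ℝ) (ht : 2 ≤ t) :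
    gaussMeas (largeProd t) ≤ ENNReal.ofReal (48 * Real.log t / t) := by
  have h := gaussMeas_largeProd_inter_le t ht MeasurableSet.univ
  rw [Set.preimage_univ, Set.inter_univ] at h
  exact h.trans (mul_le_of_le_one_right (by positivity) gaussMeas_univ_le)

/-- Two overlapping large products `a₁ a₂ ≥ t` and `a₂ a₃ ≥ t`, by conditioning on `a₂`. -/
lemma gaussMeas_overlap_le (t : ℝ) (ht : 2 ≤ t) :
    gaussMeas (largeProd t ∩ gaussMap ⁻¹' largeProd t) ≤ ENNReal.ofReal (96 / t) := by
  have ht0 : 0 < t := by linarith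
  have hcov : largeProd t ∩ gaussMap ⁻¹' largeProd t ⊆
      ⋃ b : ℕ, {x | t / b ≤ (pq x 1 : ℝ)} ∩ gaussMap ⁻¹' ({x | pq x 1 = b} ∩
        gaussMap ⁻¹' ({x | t / b ≤ (pq x 1 : ℝ)} ∩ gaussMap ⁻¹' Set.univ)) := by
    rintro x ⟨hx, hx'⟩
    refine Set.mem_iUnion.2 ⟨pq (gaussMap x) 1, ?_, rfl, ?_, trivial⟩
    · exact div_pq_le hx.out
    · exact div_pq_le (hx'.out.trans_eq (mul_comm _ _))
  refine (measure_mono hcov).trans ((measure_iUnion_le _).trans ?_)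
  have hterm : ∀ b : ℕ, gaussMeas ({x | t / b ≤ (pq x 1 : ℝ)} ∩ gaussMap ⁻¹' ({x | pq x 1 = b} ∩
        gaussMap ⁻¹' ({x | t / b ≤ (pq x 1 : ℝ)} ∩ gaussMap ⁻¹' Set.univ))) ≤
      ENNReal.ofReal (32 * (1 / (b : ℝ) ^ 2 * min 1 (b / t) ^ 2)) := by
    intro b
    have hm1 := (measurableSet_le_pq (t / b)).inter (measurable_gaussMap MeasurableSet.univ)
    have hm2 := (measurableSet_pq_eq b).inter (measurable_gaussMap hm1)
    have hcyl := gaussMeas_cylinder_le b hm1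
    rcases Nat.eq_zero_or_pos b with rfl | hb
    · refine ((measure_mono Set.inter_subset_right).trans (gaussMeas_preimage_le hm2)).trans ?_
      simpa using hcyl
    · have hb' : (0 : ℝ) < b := by exact_mod_cast hb
      have hs : 0 < t / b := by positivity
      have hmin : 0 ≤ min 1 ((b : ℝ) / t) := le_min zero_le_one (by positivity)
      have hlast := (gaussMeas_large_digit_le (t / b) hs MeasurableSet.univ).trans
        (mul_le_of_le_one_right (by positivity) gaussMeas_univ_le)
      refine (gaussMeas_large_digit_le (t / b) hs hm2).trans ?_
      refine (mul_le_mul_right (hcyl.trans (mul_le_mul_right hlast _)) _).trans ?_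
      rw [one_div_div, ← ENNReal.ofReal_mul (by positivity), ← ENNReal.ofReal_mul (by positivity)]
      apply le_of_eq
      congr 1
      ring
  refine (ENNReal.tsum_le_tsum hterm).trans ?_
  apply ENNReal.tsum_le_of_sum_range_le
  intro N
  rw [← ENNReal.ofReal_sum_of_nonneg (fun i _ => by positivity), ← Finset.mul_sum]
  apply ENNReal.ofReal_le_ofReal
  have := sum_min_sq_le t ht N
  calc _ ≤ 32 * (3 / t) := by gcongr
    _ = _ := by ring

/-- Two large products at distance at least `2` are almost independent. -/
lemma gaussMeas_separated_le (t : ℝ) (ht : 2 ≤ t) (m : ℕ) :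
    gaussMeas (largeProd t ∩ gaussMap^[m + 2] ⁻¹' largeProd t) ≤
      ENNReal.ofReal ((48 * Real.log t / t) ^ 2) := by
  have hlog : 0 ≤ Real.log t := Real.log_nonneg (by linarith)
  have hM := measurableSet_largeProd t
  rw [Function.iterate_add, Set.preimage_comp]
  refine (gaussMeas_largeProd_inter_le t ht (measurable_gaussMap.iterate m hM)).trans ?_
  rw [sq, ENNReal.ofReal_mul (by positivity)]
  gcongr
  exact (gaussMeas_preimage_iterate_le m hM).trans (gaussMeas_largeProd_le t ht)

lemma mem_preimage_largeProd {t x : ℝ} {k : ℕ} (hk : 1 ≤ k) :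
    gaussMap^[k - 1] x ∈ largeProd t ↔ t ≤ (pq x k : ℝ) * (pq x (k + 1) : ℝ) := by
  have h1 := pq_add x (k - 1) 1 le_rfl
  have h2 := pq_add x k 1 le_rfl
  rw [Nat.sub_add_cancel hk] at h1
  have h3 : gaussMap (gaussMap^[k - 1] x) = gaussMap^[k] x := by
    rw [← Function.iterate_succ_apply' gaussMap, Nat.succ_eq_add_one, Nat.sub_add_cancel hk]
  rw [largeProd, Set.mem_ofPred_eq, h3, ← h1, ← h2]

/-- The event that the products at positions `k = j + 1` and `n` are both large. -/
def pairEvent (t : ℝ) (n j : ℕ) : Set ℝ :=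
  gaussMap^[j] ⁻¹' (largeProd t ∩ gaussMap^[n - 1 - j] ⁻¹' largeProd t)

lemma measurableSet_pairEvent_core (t : ℝ) (i : ℕ) :
    MeasurableSet (largeProd t ∩ gaussMap^[i] ⁻¹' largeProd t) :=
  (measurableSet_largeProd t).inter (measurable_gaussMap.iterate i (measurableSet_largeProd t))

lemma Aset_subset (φ : ℕ → ℝ) (n : ℕ) :
    Aset φ n ⊆ (⋃ j ∈ Finset.range (n - 1), pairEvent (φ n) n j) ∩ irrUnit := by
  rintro x ⟨hx, hirr, k, hk1, hkn, h1, h2⟩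
  refine ⟨?_, hx, hirr⟩
  refine Set.mem_biUnion (x := k - 1) (by simp; omega) ⟨(mem_preimage_largeProd hk1).2 h1, ?_⟩
  rw [Set.mem_preimage, ← Function.iterate_add_apply,
    show n - 1 - (k - 1) + (k - 1) = n - 1 by omega]
  exact (mem_preimage_largeProd (by omega)).2 h2

lemma gaussMeas_biUnion_pairEvent_le (t : ℝ) (ht : 2 ≤ t) (n : ℕ) (hn : 2 ≤ n) :
    gaussMeas (⋃ j ∈ Finset.range (n - 1), pairEvent t n j) ≤
      ENNReal.ofReal (n * (48 * Real.log t / t) ^ 2 + 96 / t) := by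
  obtain ⟨m, rfl⟩ : ∃ m, n = m + 2 := ⟨n - 2, by omega⟩
  refine (measure_biUnion_finset_le _ _).trans ?_
  rw [show m + 2 - 1 = m + 1 by omega, Finset.sum_range_succ,
    ENNReal.ofReal_add (by positivity) (by positivity)]
  gcongr
  · have hterm : ∀ j ∈ Finset.range m, gaussMeas (pairEvent t (m + 2) j) ≤
        ENNReal.ofReal ((48 * Real.log t / t) ^ 2) := by
      intro j hj
      rw [Finset.mem_range] at hj
      refine (gaussMeas_preimage_iterate_le j (measurableSet_pairEvent_core t _)).trans ?_
      rw [show m + 2 - 1 - j = (m - 1 - j) + 2 by omega]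
      exact gaussMeas_separated_le t ht _
    refine (Finset.sum_le_sum hterm).trans ?_
    rw [Finset.sum_const, Finset.card_range, nsmul_eq_mul, ENNReal.ofReal_mul (by positivity),
      ENNReal.ofReal_natCast]
    gcongr
    omega
  · refine (gaussMeas_preimage_iterate_le m (measurableSet_pairEvent_core t _)).trans ?_
    rw [show m + 2 - 1 - m = 1 by omega, Function.iterate_one]
    exact gaussMeas_overlap_le t ht

theorem measure_Aset_upper (φ : ℕ → ℝ) (hpos : ∀ n, 0 < φ n) (hmono : Monotone φ)
    (htends : Filter.Tendsto φ Filter.atTop Filter.atTop) :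
    ∃ C : ℝ, 0 < C ∧ ∀ n : ℕ, 2 ≤ n → 2 ≤ φ n →
      volume (Aset φ n) ≤
        ENNReal.ofReal (C * ((n : ℝ) * Real.log (φ n) ^ 2 / φ n ^ 2 + 1 / φ n)) := by
  refine ⟨4608, by norm_num, fun n hn ht => ?_⟩
  have hmeas : MeasurableSet (⋃ j ∈ Finset.range (n - 1), pairEvent (φ n) n j) :=
    Finset.measurableSet_biUnion _ fun j _ =>
      measurable_gaussMap.iterate j (measurableSet_pairEvent_core (φ n) _)
  refine (measure_mono (Aset_subset φ n)).trans ((volume_le_gaussMeas hmeas).trans ?_)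
  refine (mul_le_mul_right (gaussMeas_biUnion_pairEvent_le (φ n) ht n hn) 2).trans ?_
  rw [show (2 : ℝ≥0∞) = ENNReal.ofReal 2 by simp, ← ENNReal.ofReal_mul (by norm_num)]
  apply ENNReal.ofReal_le_ofReal
  have h0 : 0 < φ n := hpos n
  have h1 : 0 ≤ 1 / φ n := by positivity
  calc 2 * (n * (48 * Real.log (φ n) / φ n) ^ 2 + 96 / φ n)
      = 4608 * (n * Real.log (φ n) ^ 2 / φ n ^ 2) + 192 * (1 / φ n) := by ring
    _ ≤ _ := by linarith
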